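/- Let Γ(x,t) = (4πt)^{−1} e^{−|x|²/(4t)} be the two-dimensional heat kernel and E(z) = (1/(2π)) log|z|. For x = (x₁,x₂) with x₂ ≥ 0, y = (y₁,y₂) with y₂ > 0, and t > 0, define the pressure tensor component P₁(x,y,t) = 4 ∂_{x₁} [ ∫_ℝ E(x₁ − z₁, x₂) · ∂_{y₂}Γ(z₁ − y₁, y₂, t) dz₁ ]. Then for every integer s ≥ 0 and all multi-indices k = (k₁,k₂) and m = (m₁,m₂) there exist constants C, c > 0 such that for all such x, y, t: |∂_t^s ∂_{x₁}^{k₁}∂_{x₂}^{k₂}∂_{y₁}^{m₁}∂_{y₂}^{m₂} P₁(x,y,t)| ≤ C t^{−1−s−m₂/2} (|x − y*|² + t)^{−(1+k₁+k₂+m₁)/2} e^{−c y₂²/t}, where y* = (y₁, −y₂). -/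

import Mathlib

/-- The two-dimensional heat kernel `Γ(x,t) = (4πt)⁻¹ e^{−|x|²/(4t)}`. -/
noncomputable def heatK (x₁ x₂ t : ℝ) : ℝ :=
  (4 * Real.pi * t)⁻¹ * Real.exp (-(x₁ ^ 2 + x₂ ^ 2) / (4 * t))

/-- The fundamental solution of the Laplacian on `ℝ²`: `E(z) = (1/2π) log|z|`. -/
noncomputable def Efun2 (z₁ z₂ : ℝ) : ℝ :=
  Real.log (Real.sqrt (z₁ ^ 2 + z₂ ^ 2)) / (2 * Real.pi)

/-- The pressure tensor component
`P₁(x,y,t) = 4 ∂_{x₁}[∫_ℝ E(x₁−z₁,x₂)·∂_{y₂}Γ(z₁−y₁,y₂,t) dz₁]` of the Stokes system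
in the half-plane with Navier boundary conditions. -/
noncomputable def Pten (x₁ x₂ y₁ y₂ t : ℝ) : ℝ :=
  4 * deriv (fun a =>
    ∫ z₁ : ℝ, Efun2 (a - z₁) x₂ * deriv (fun b => heatK (z₁ - y₁) b t) y₂) x₁

/-- Partial derivative operators on functions of five real variables
`(x₁, x₂, y₁, y₂, t)`. -/
noncomputable def DX1 (f : ℝ → ℝ → ℝ → ℝ → ℝ → ℝ) : ℝ → ℝ → ℝ → ℝ → ℝ → ℝ :=
  fun a b c d e => deriv (fun s => f s b c d e) a
noncomputable def DX2 (f : ℝ → ℝ → ℝ → ℝ → ℝ → ℝ) : ℝ → ℝ → ℝ → ℝ → ℝ → ℝ :=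
  fun a b c d e => deriv (fun s => f a s c d e) b
noncomputable def DY1 (f : ℝ → ℝ → ℝ → ℝ → ℝ → ℝ) : ℝ → ℝ → ℝ → ℝ → ℝ → ℝ :=
  fun a b c d e => deriv (fun s => f a b s d e) c
noncomputable def DY2 (f : ℝ → ℝ → ℝ → ℝ → ℝ → ℝ) : ℝ → ℝ → ℝ → ℝ → ℝ → ℝ :=
  fun a b c d e => deriv (fun s => f a b c s e) d
noncomputable def DT (f : ℝ → ℝ → ℝ → ℝ → ℝ → ℝ) : ℝ → ℝ → ℝ → ℝ → ℝ → ℝ :=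
  fun a b c d e => deriv (fun s => f a b c d s) e

/-!
Since `∂_{x₁} E(x₁ - z, x₂) = (1/2π) Im (x₂ - (x₁ - z) i)⁻¹` and
`(ζ + z i)⁻¹ = ∫₀^∞ e^{-(ζ + z i) ξ} dξ`, integrating out the Gaussian in `z` turns `P₁` into
`-(2π^{3/2})⁻¹ y₂ t^{-3/2} e^{-y₂²/(4t)} Im F₀(ζ, t)` with `ζ = x₂ + (y₁ - x₁) i` and
`Fₙ(ζ, t) = ∫₀^∞ ξⁿ e^{-ξ² t - ξ ζ} dξ`. As `∂_ζ Fₙ = -Fₙ₊₁` and `∂_t Fₙ = -Fₙ₊₂`, every derivative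
of `P₁` is the real part of a linear combination of terms `y₂ᵃ tʳ e^{-y₂²/(4t)} Fₙ(ζ, t)` of known
homogeneity. Repeated integration by parts gives `|Fₙ(ζ, t)| ≤ C (|ζ|² + t)^{-(n+1)/2}` on the
closed half-plane `Re ζ ≥ 0`, and since `|ζ + y₂| = |x - y*|`, replacing `|ζ|² + t` by
`|x - y*|² + t` costs only a power of `1 + y₂²/t`, which the Gaussian in `y₂` absorbs.
-/

open MeasureTheory Set Filter Topology

theorem deriv_eq_zero_or_eq_of_eventually {E : Type*} [NormedAddCommGroup E] [NormedSpace ℝ E]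
    {v φ : ℝ → E} {φ' c : E} {x : ℝ} (h : ∀ᶠ y in 𝓝[>] x, v y = c ∨ v y = φ y)
    (hφ : HasDerivAt φ φ' x) : deriv v x = 0 ∨ deriv v x = φ' := by
  by_cases hv : DifferentiableAt ℝ v x
  swap
  · exact .inl (deriv_zero_of_not_differentiableAt hv)
  by_contra! hne
  have hle : 𝓝[>] x ≤ 𝓝[≠] x := nhdsWithin_mono _ fun y hy => ne_of_gt hy
  have hvc : ∀ᶠ y in 𝓝[>] x, v y ≠ c := (hv.hasDerivAt.eventually_ne hne.1).filter_mono hle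
  have hvφ : ∀ᶠ y in 𝓝[>] x, (v - φ) y ≠ 0 :=
    ((hv.hasDerivAt.sub hφ).eventually_ne (sub_ne_zero.2 hne.2)).filter_mono hle
  obtain ⟨y, hy, hyc, hyφ⟩ := (h.and (hvc.and hvφ)).exists
  exact hy.elim hyc fun hy => hyφ (by simp [hy])

section GaussLaplace

variable {n N : ℕ} {ζ : ℂ} {t : ℝ}

/-- The integrand of `gaussLaplace`. -/
noncomputable def gaussLaplaceKernel (n : ℕ) (ζ : ℂ) (t ξ : ℝ) : ℂ :=
  (ξ : ℂ) ^ n * Complex.exp (-ξ * ζ - ξ ^ 2 * t)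

/-- The Laplace transform `ζ ↦ ∫₀^∞ ξⁿ e^{-ξ² t} e^{-ξζ} dξ` of a moment of the Gaussian; up to
elementary factors these are the derivatives of the pressure tensor. -/
noncomputable def gaussLaplace (n : ℕ) (ζ : ℂ) (t : ℝ) : ℂ :=
  ∫ ξ in Ioi (0 : ℝ), gaussLaplaceKernel n ζ t ξ

theorem continuous_gaussLaplaceKernel : Continuous (gaussLaplaceKernel n ζ t) := by
  unfold gaussLaplaceKernel
  fun_prop

theorem norm_gaussLaplaceKernel_le {R s ξ : ℝ} (hξ : 0 ≤ ξ) (hR : R ≤ ζ.re) (hs : s ≤ t) :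
    ‖gaussLaplaceKernel n ζ t ξ‖ ≤ ξ ^ n * Real.exp (-ξ * R - ξ ^ 2 * s) := by
  have hre : (-(ξ : ℂ) * ζ - (ξ : ℂ) ^ 2 * t).re = -ξ * ζ.re - ξ ^ 2 * t := by
    simp [← Complex.ofReal_pow]
  rw [gaussLaplaceKernel, norm_mul, norm_pow, Complex.norm_of_nonneg hξ, Complex.norm_exp, hre]
  have := mul_le_mul_of_nonneg_left hR hξ
  gcongr _ * Real.exp (?_ - ξ ^ 2 * ?_)
  linarith

theorem integrableOn_pow_mul_exp_sub_sq (n : ℕ) (R : ℝ) (ht : 0 < t) :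
    IntegrableOn (fun ξ : ℝ => ξ ^ n * Real.exp (-ξ * R - ξ ^ 2 * t)) (Ioi 0) := by
  have hgauss : Integrable fun ξ : ℝ =>
      Real.exp (R ^ 2 / (2 * t)) * (ξ ^ (n : ℝ) * Real.exp (-(t / 2) * ξ ^ 2)) :=
    (integrable_rpow_mul_exp_neg_mul_sq (half_pos ht)
      (by linarith [n.cast_nonneg (α := ℝ)])).const_mul _
  refine hgauss.integrableOn.mono' (by fun_prop) ?_
  filter_upwards [ae_restrict_mem measurableSet_Ioi] with ξ (hξ : 0 < ξ)
  have hsq : R ^ 2 / (2 * t) + -(t / 2) * ξ ^ 2 - (-ξ * R - ξ ^ 2 * t)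
      = (R + t * ξ) ^ 2 / (2 * t) := by
    field_simp
    ring
  have hnonneg : 0 ≤ (R + t * ξ) ^ 2 / (2 * t) := by positivity
  rw [Real.norm_of_nonneg (by positivity), Real.rpow_natCast, mul_left_comm, ← Real.exp_add]
  gcongr
  linarith

theorem integrableOn_gaussLaplaceKernel (ht : 0 < t) :
    IntegrableOn (gaussLaplaceKernel n ζ t) (Ioi 0) := by
  refine (integrableOn_pow_mul_exp_sub_sq n ζ.re ht).mono'
    continuous_gaussLaplaceKernel.aestronglyMeasurable ?_
  filter_upwards [ae_restrict_mem measurableSet_Ioi] with ξ hξ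
  exact norm_gaussLaplaceKernel_le (mem_Ioi.1 hξ).le le_rfl le_rfl

theorem hasDerivAt_gaussLaplace (n : ℕ) (ζ : ℂ) (ht : 0 < t) :
    HasDerivAt (fun z => gaussLaplace n z t) (-gaussLaplace (n + 1) ζ t) ζ := by
  rw [gaussLaplace, ← integral_neg]
  refine (hasDerivAt_integral_of_dominated_loc_of_deriv_le (s := {z | ζ.re - 1 < z.re})
    (F' := fun z ξ => -gaussLaplaceKernel (n + 1) z t ξ)
    ((isOpen_lt continuous_const Complex.continuous_re).mem_nhds (sub_one_lt ζ.re))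
    (.of_forall fun z => continuous_gaussLaplaceKernel.aestronglyMeasurable)
    (integrableOn_gaussLaplaceKernel ht) continuous_gaussLaplaceKernel.neg.aestronglyMeasurable
    ?_ (integrableOn_pow_mul_exp_sub_sq (n + 1) (ζ.re - 1) ht) (.of_forall fun ξ z _ => ?_)).2
  · filter_upwards [ae_restrict_mem measurableSet_Ioi] with ξ hξ z (hz : ζ.re - 1 < z.re)
    rw [norm_neg]
    exact norm_gaussLaplaceKernel_le (mem_Ioi.1 hξ).le hz.le le_rfl
  · have hphase : HasDerivAt (fun z : ℂ => -(ξ : ℂ) * z - ξ ^ 2 * t) (-(ξ : ℂ)) z := by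
      simpa using ((hasDerivAt_id z).const_mul (-(ξ : ℂ))).sub_const (ξ ^ 2 * t : ℂ)
    exact (hphase.cexp.const_mul ((ξ : ℂ) ^ n)).congr_deriv (by rw [gaussLaplaceKernel]; ring)

theorem hasDerivAt_gaussLaplace_time (n : ℕ) (ζ : ℂ) (ht : 0 < t) :
    HasDerivAt (gaussLaplace n ζ) (-gaussLaplace (n + 2) ζ t) t := by
  rw [gaussLaplace, ← integral_neg]
  refine (hasDerivAt_integral_of_dominated_loc_of_deriv_le
    (F := fun s ξ => gaussLaplaceKernel n ζ s ξ)
    (F' := fun s ξ => -gaussLaplaceKernel (n + 2) ζ s ξ) (Ioi_mem_nhds (half_lt_self ht))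
    (.of_forall fun s => continuous_gaussLaplaceKernel.aestronglyMeasurable)
    (integrableOn_gaussLaplaceKernel ht) continuous_gaussLaplaceKernel.neg.aestronglyMeasurable
    ?_ (integrableOn_pow_mul_exp_sub_sq (n + 2) ζ.re (half_pos ht))
    (.of_forall fun ξ s _ => ?_)).2
  · filter_upwards [ae_restrict_mem measurableSet_Ioi] with ξ hξ s hs
    rw [norm_neg]
    exact norm_gaussLaplaceKernel_le (mem_Ioi.1 hξ).le le_rfl (mem_Ioi.1 hs).le
  · have hphase : HasDerivAt (fun s : ℝ => -(ξ : ℂ) * ζ - ξ ^ 2 * s) (-(ξ : ℂ) ^ 2) s := by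
      simpa using ((hasDerivAt_id s).ofReal_comp.const_mul ((ξ : ℂ) ^ 2)).const_sub (-(ξ : ℂ) * ζ)
    exact (hphase.cexp.const_mul ((ξ : ℂ) ^ n)).congr_deriv (by rw [gaussLaplaceKernel]; ring)

theorem hasDerivAt_gaussLaplaceKernel (n : ℕ) (ζ : ℂ) (t ξ : ℝ) :
    HasDerivAt (gaussLaplaceKernel n ζ t)
      (n * gaussLaplaceKernel (n - 1) ζ t ξ - ζ * gaussLaplaceKernel n ζ t ξ
        - 2 * t * gaussLaplaceKernel (n + 1) ζ t ξ) ξ := by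
  have hphase : HasDerivAt (fun z : ℂ => -z * ζ - z ^ 2 * t) (-ζ - 2 * ξ * t) (ξ : ℂ) :=
    (((hasDerivAt_id (ξ : ℂ)).neg.mul_const ζ).sub
      ((hasDerivAt_pow 2 (ξ : ℂ)).mul_const (t : ℂ))).congr_deriv (by simp)
  refine ((hasDerivAt_pow n (ξ : ℂ)).mul hphase.cexp).comp_ofReal.congr_deriv ?_
  simp only [gaussLaplaceKernel]
  ring

/-- Integration by parts; for `n = 0` the term `n * gaussLaplace (n - 1) ζ t` vanishes and the
boundary term is `0 ^ 0 = 1`. -/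
theorem mul_gaussLaplace (n : ℕ) (ζ : ℂ) (ht : 0 < t) :
    ζ * gaussLaplace n ζ t =
      0 ^ n + n * gaussLaplace (n - 1) ζ t - 2 * t * gaussLaplace (n + 1) ζ t := by
  have hint (k : ℕ) (c : ℂ) :
      Integrable (fun ξ => c * gaussLaplaceKernel k ζ t ξ) (volume.restrict (Ioi 0)) :=
    (integrableOn_gaussLaplaceKernel ht).const_mul c
  have hderiv (ξ : ℝ) := hasDerivAt_gaussLaplaceKernel n ζ t ξ
  have hint' := ((hint (n - 1) n).sub (hint n ζ)).sub (hint (n + 1) (2 * t))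
  have hlim := tendsto_zero_of_hasDerivAt_of_integrableOn_Ioi (fun ξ _ => hderiv ξ) hint'
    (integrableOn_gaussLaplaceKernel ht)
  have hparts := integral_Ioi_of_hasDerivAt_of_tendsto
    continuous_gaussLaplaceKernel.continuousWithinAt (fun ξ _ => hderiv ξ) hint' hlim
  have hzero : gaussLaplaceKernel n ζ t 0 = 0 ^ n := by simp [gaussLaplaceKernel]
  rw [integral_sub
      (f := fun ξ => n * gaussLaplaceKernel (n - 1) ζ t ξ - ζ * gaussLaplaceKernel n ζ t ξ)
      ((hint _ _).sub (hint _ _)) (hint _ _), integral_sub (hint _ _) (hint _ _),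
    integral_const_mul, integral_const_mul, integral_const_mul, hzero] at hparts
  simp only [gaussLaplace]
  linear_combination -hparts

theorem exists_sqrt_pow_mul_norm_gaussLaplace_le (n : ℕ) :
    ∃ C ≥ 0, ∀ (ζ : ℂ) (t : ℝ), 0 ≤ ζ.re → 0 < t → √t ^ (n + 1) * ‖gaussLaplace n ζ t‖ ≤ C := by
  refine ⟨1 / 2 * Real.Gamma ((n + 1) / 2), by positivity, fun ζ t hζ ht => ?_⟩
  have hn : (-1 : ℝ) < n := by linarith [n.cast_nonneg (α := ℝ)]
  have hle : ‖gaussLaplace n ζ t‖ ≤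
      ∫ ξ in Ioi (0 : ℝ), ξ ^ (n : ℝ) * Real.exp (-t * ξ ^ (2 : ℝ)) := by
    refine norm_integral_le_of_norm_le
      (by simpa [IntegrableOn] using (integrable_rpow_mul_exp_neg_mul_sq ht hn).integrableOn) ?_
    filter_upwards [ae_restrict_mem measurableSet_Ioi] with ξ hξ
    simpa [mul_comm t] using norm_gaussLaplaceKernel_le (n := n) (mem_Ioi.1 hξ).le hζ le_rfl
  rw [integral_rpow_mul_exp_neg_mul_rpow two_pos hn ht] at hle
  have hcancel : √t ^ (n + 1) * t ^ (-((n : ℝ) + 1) / 2) = 1 := by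
    rw [Real.sqrt_eq_rpow, ← Real.rpow_mul_natCast ht.le, ← Real.rpow_add ht]
    convert Real.rpow_zero t
    push_cast
    ring
  calc √t ^ (n + 1) * ‖gaussLaplace n ζ t‖
      ≤ √t ^ (n + 1) * (t ^ (-((n : ℝ) + 1) / 2) * (1 / 2) * Real.Gamma ((n + 1) / 2)) := by gcongr
    _ = √t ^ (n + 1) * t ^ (-((n : ℝ) + 1) / 2) * (1 / 2 * Real.Gamma ((n + 1) / 2)) := by ring
    _ = 1 / 2 * Real.Gamma ((n + 1) / 2) := by rw [hcancel, one_mul]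

theorem norm_mul_norm_gaussLaplace_le (n : ℕ) (ζ : ℂ) (ht : 0 < t) :
    ‖ζ‖ * ‖gaussLaplace n ζ t‖ ≤
      0 ^ n + n * ‖gaussLaplace (n - 1) ζ t‖ + 2 * t * ‖gaussLaplace (n + 1) ζ t‖ := by
  rw [← norm_mul, mul_gaussLaplace n ζ ht]
  refine (norm_sub_le _ _).trans (add_le_add ((norm_add_le _ _).trans (le_of_eq ?_)) (le_of_eq ?_))
  · simp
  · simp [abs_of_pos ht]

theorem exists_norm_pow_mul_sqrt_pow_mul_norm_gaussLaplace_le (j m n : ℕ) (h : j + m = n + 1) :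
    ∃ C ≥ 0, ∀ (ζ : ℂ) (t : ℝ), 0 ≤ ζ.re → 0 < t →
      ‖ζ‖ ^ j * √t ^ m * ‖gaussLaplace n ζ t‖ ≤ C := by
  induction j generalizing m n with
  | zero =>
    obtain rfl : m = n + 1 := by lia
    simpa using exists_sqrt_pow_mul_norm_gaussLaplace_le n
  | succ j ih =>
    obtain ⟨C₁, hC₁, hle₁⟩ : ∃ C ≥ 0, ∀ (ζ : ℂ) (t : ℝ), 0 ≤ ζ.re → 0 < t →
        ‖ζ‖ ^ j * √t ^ m * (0 ^ n + n * ‖gaussLaplace (n - 1) ζ t‖) ≤ C := by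
      rcases n with _ | n
      · obtain ⟨rfl, rfl⟩ : j = 0 ∧ m = 0 := by lia
        exact ⟨1, by simp⟩
      · obtain ⟨C, hC, hle⟩ := ih m n (by lia)
        refine ⟨(n + 1) * C, by positivity, fun ζ t hζ ht => ?_⟩
        calc ‖ζ‖ ^ j * √t ^ m * (0 ^ (n + 1) + (n + 1 : ℕ) * ‖gaussLaplace n ζ t‖)
            = (n + 1) * (‖ζ‖ ^ j * √t ^ m * ‖gaussLaplace n ζ t‖) := by push_cast; ring
          _ ≤ (n + 1) * C := by gcongr; exact hle ζ t hζ ht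
    obtain ⟨C₂, hC₂, hle₂⟩ := ih (m + 2) (n + 1) (by lia)
    refine ⟨C₁ + 2 * C₂, by positivity, fun ζ t hζ ht => ?_⟩
    calc ‖ζ‖ ^ (j + 1) * √t ^ m * ‖gaussLaplace n ζ t‖
        = ‖ζ‖ ^ j * √t ^ m * (‖ζ‖ * ‖gaussLaplace n ζ t‖) := by ring
      _ ≤ ‖ζ‖ ^ j * √t ^ m * (0 ^ n + n * ‖gaussLaplace (n - 1) ζ t‖
            + 2 * t * ‖gaussLaplace (n + 1) ζ t‖) := by
          gcongr
          exact norm_mul_norm_gaussLaplace_le n ζ ht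
      _ = ‖ζ‖ ^ j * √t ^ m * (0 ^ n + n * ‖gaussLaplace (n - 1) ζ t‖)
            + 2 * (‖ζ‖ ^ j * √t ^ (m + 2) * ‖gaussLaplace (n + 1) ζ t‖) := by
          rw [pow_add √t, Real.sq_sqrt ht.le]
          ring
      _ ≤ C₁ + 2 * C₂ := by
          gcongr
          exacts [hle₁ ζ t hζ ht, hle₂ ζ t hζ ht]

theorem exists_norm_gaussLaplace_le (n : ℕ) :
    ∃ C ≥ 0, ∀ (ζ : ℂ) (t : ℝ), 0 ≤ ζ.re → 0 < t →
      ‖gaussLaplace n ζ t‖ ≤ C * (‖ζ‖ ^ 2 + t) ^ (-((1 + n : ℝ) / 2)) := by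
  obtain ⟨C₁, hC₁, hle₁⟩ :=
    exists_norm_pow_mul_sqrt_pow_mul_norm_gaussLaplace_le (n + 1) 0 n rfl
  obtain ⟨C₂, hC₂, hle₂⟩ := exists_sqrt_pow_mul_norm_gaussLaplace_le n
  refine ⟨2 ^ n * (C₁ + C₂), by positivity, fun ζ t hζ ht => ?_⟩
  have hpos : 0 < ‖ζ‖ ^ 2 + t := by positivity
  have hroot : √(‖ζ‖ ^ 2 + t) ≤ ‖ζ‖ + √t := by
    rw [Real.sqrt_le_left (by positivity), add_sq, Real.sq_sqrt ht.le]
    linarith [show 0 ≤ 2 * ‖ζ‖ * √t by positivity]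
  have hpow : (‖ζ‖ ^ 2 + t) ^ ((1 + n : ℝ) / 2) ≤ 2 ^ n * (‖ζ‖ ^ (n + 1) + √t ^ (n + 1)) := by
    calc (‖ζ‖ ^ 2 + t) ^ ((1 + n : ℝ) / 2) = √(‖ζ‖ ^ 2 + t) ^ (n + 1) := by
          rw [Real.sqrt_eq_rpow, ← Real.rpow_mul_natCast hpos.le]
          push_cast
          ring_nf
      _ ≤ (‖ζ‖ + √t) ^ (n + 1) := by gcongr
      _ ≤ 2 ^ n * (‖ζ‖ ^ (n + 1) + √t ^ (n + 1)) := add_pow_le (by positivity) (by positivity) _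
  rw [Real.rpow_neg hpos.le, ← div_eq_mul_inv, le_div_iff₀ (by positivity)]
  calc ‖gaussLaplace n ζ t‖ * (‖ζ‖ ^ 2 + t) ^ ((1 + n : ℝ) / 2)
      ≤ ‖gaussLaplace n ζ t‖ * (2 ^ n * (‖ζ‖ ^ (n + 1) + √t ^ (n + 1))) := by gcongr
    _ = 2 ^ n * (‖ζ‖ ^ (n + 1) * √t ^ 0 * ‖gaussLaplace n ζ t‖
          + √t ^ (n + 1) * ‖gaussLaplace n ζ t‖) := by ring
    _ ≤ 2 ^ n * (C₁ + C₂) := by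
        gcongr
        exacts [hle₁ ζ t hζ ht, hle₂ ζ t hζ ht]

theorem exists_norm_gaussLaplace_le_of_le (h : N ≤ n) :
    ∃ C ≥ 0, ∀ (ζ : ℂ) (t : ℝ), 0 ≤ ζ.re → 0 < t →
      ‖gaussLaplace n ζ t‖ ≤
        C * t ^ (-((n - N : ℝ) / 2)) * (‖ζ‖ ^ 2 + t) ^ (-((1 + N : ℝ) / 2)) := by
  obtain ⟨C, hC, hle⟩ := exists_norm_gaussLaplace_le n
  refine ⟨C, hC, fun ζ t hζ ht => (hle ζ t hζ ht).trans ?_⟩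
  have hN : (N : ℝ) ≤ n := mod_cast h
  rw [show -((1 + n : ℝ) / 2) = -((n - N : ℝ) / 2) + -((1 + N : ℝ) / 2) by ring,
    Real.rpow_add (by positivity), mul_assoc]
  gcongr C * (?_ * _)
  exact Real.rpow_le_rpow_of_nonpos ht (le_add_of_nonneg_left (by positivity)) (by linarith)

end GaussLaplace

section LogarithmicPotential

variable {φ : ℝ → ℝ} {x X u : ℝ}

theorem abs_Efun2_le (hu : u ≠ 0) (hx : 0 ≤ x) : |Efun2 u x| ≤ |Real.log u| + |u| + x := by
  have hu' : 0 < |u| := abs_pos.2 hu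
  have hlow : |u| ≤ √(u ^ 2 + x ^ 2) := Real.abs_le_sqrt (le_add_of_nonneg_right (sq_nonneg x))
  have hupp : √(u ^ 2 + x ^ 2) ≤ |u| + x := by
    rw [Real.sqrt_le_left (by positivity), add_sq, sq_abs]
    linarith [show 0 ≤ 2 * |u| * x by positivity]
  have hlog : |Real.log √(u ^ 2 + x ^ 2)| ≤ |Real.log u| + |u| + x := by
    have hmono := Real.log_le_log hu' hlow
    rw [Real.log_abs] at hmono
    rw [abs_le]
    constructor
    · linarith [neg_abs_le (Real.log u)]
    · linarith [abs_nonneg (Real.log u), Real.log_le_self (Real.sqrt_nonneg (u ^ 2 + x ^ 2))]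
  have hpi : 1 ≤ 2 * Real.pi := by linarith [Real.pi_gt_three]
  rw [Efun2, abs_div, abs_of_pos Real.two_pi_pos]
  exact (div_le_self (abs_nonneg _) hpi).trans hlog

theorem hasDerivAt_Efun2 (u : ℝ) (hx : x ≠ 0) :
    HasDerivAt (fun v => Efun2 v x) (((x - u * Complex.I)⁻¹).im / (2 * Real.pi)) u := by
  have hpos (v : ℝ) : 0 < v ^ 2 + x ^ 2 := by positivity
  have him : ((x - u * Complex.I)⁻¹).im = u / (u ^ 2 + x ^ 2) := by
    simp [Complex.inv_im, Complex.normSq_apply]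
    ring
  have hlog := (((hasDerivAt_pow 2 u).add_const (x ^ 2)).log (hpos u).ne').div_const 2
  simp only [Efun2, Real.log_sqrt (hpos _).le]
  refine (hlog.div_const (2 * Real.pi)).congr_deriv ?_
  rw [him]
  simp
  ring

theorem measurable_Efun2_sub (w x : ℝ) : Measurable fun z => Efun2 (w - z) x := by
  unfold Efun2
  fun_prop

theorem continuousAt_Efun2 (hu : u ≠ 0) (x : ℝ) : ContinuousAt (Efun2 u) x := by
  unfold Efun2
  exact (ContinuousAt.log (by fun_prop) (by positivity)).div_const _

theorem ae_sub_ne_zero (w : ℝ) : ∀ᵐ z : ℝ, w - z ≠ 0 := by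
  filter_upwards [Measure.ae_ne volume w] with z hz
  exact sub_ne_zero.2 hz.symm

theorem integrable_sub_mul (w : ℝ) (hφ : Integrable φ) (hzφ : Integrable fun z => z * φ z) :
    Integrable fun z => (w - z) * φ z :=
  ((hφ.const_mul w).sub hzφ).congr (.of_forall fun z => (sub_mul w z (φ z)).symm)

theorem integrable_log_sub_mul {M : ℝ} (w : ℝ) (hφ : Integrable φ)
    (hzφ : Integrable fun z => z * φ z) (hM : ∀ z, |φ z| ≤ M) :
    Integrable fun z => Real.log (w - z) * φ z := by
  have hnear : Integrable ((Icc (-1) 1).indicator Real.log) := by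
    rw [integrable_indicator_iff measurableSet_Icc,
      ← intervalIntegrable_iff_integrableOn_Icc_of_le (by norm_num)]
    exact intervalIntegral.intervalIntegrable_log'
  have hfar (v : ℝ) : |(Icc (-1) 1)ᶜ.indicator Real.log v| ≤ |v| := by
    by_cases hv : |v| ≤ 1
    · rw [indicator_of_notMem (by simpa [← abs_le] using hv), abs_zero]
      exact abs_nonneg v
    · rw [indicator_of_mem (by simpa [← abs_le] using hv), ← Real.log_abs v,
        abs_of_nonneg (Real.log_nonneg (not_le.1 hv).le)]
      exact Real.log_le_self (abs_nonneg v)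
  have hmeas : AEStronglyMeasurable (fun z => (Icc (-1) 1)ᶜ.indicator Real.log (w - z) * φ z) :=
    ((Real.measurable_log.indicator measurableSet_Icc.compl).comp
      (measurable_const.sub measurable_id)).aestronglyMeasurable.mul hφ.1
  have hfar' : Integrable fun z => (Icc (-1) 1)ᶜ.indicator Real.log (w - z) * φ z := by
    refine (integrable_sub_mul w hφ hzφ).mono hmeas (.of_forall fun z => ?_)
    rw [norm_mul, norm_mul]
    gcongr
    exact hfar (w - z)
  refine (((hnear.comp_sub_left w).mul_bdd hφ.1 (.of_forall hM)).add hfar').congr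
    (.of_forall fun z => ?_)
  dsimp only [Pi.add_apply]
  rw [← add_mul, ← Pi.add_apply, indicator_self_add_compl]

theorem integrable_Efun2_dominator {M : ℝ} (w X : ℝ) (hφ : Integrable φ)
    (hzφ : Integrable fun z => z * φ z) (hM : ∀ z, |φ z| ≤ M) :
    Integrable fun z => (|Real.log (w - z)| + |w - z| + X) * |φ z| := by
  refine (((integrable_log_sub_mul w hφ hzφ hM).norm.add (integrable_sub_mul w hφ hzφ).norm).add
    (hφ.norm.const_mul X)).congr (.of_forall fun z => ?_)
  simp [add_mul]

theorem norm_Efun2_mul_le (w : ℝ) (hx : 0 ≤ x) (hX : x ≤ X) :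
    ∀ᵐ z : ℝ, ‖Efun2 (w - z) x * φ z‖ ≤ (|Real.log (w - z)| + |w - z| + X) * |φ z| := by
  filter_upwards [ae_sub_ne_zero w] with z hz
  rw [norm_mul]
  exact mul_le_mul_of_nonneg_right ((abs_Efun2_le hz hx).trans (by gcongr)) (abs_nonneg (φ z))

/-- The single layer potential on the line `{x₂ = 0}` with density `φ`, at the point `(w, x)`. -/
noncomputable def singleLayer (φ : ℝ → ℝ) (x w : ℝ) : ℝ :=
  ∫ z, Efun2 (w - z) x * φ z

theorem norm_inv_add_mul_I_le {ζ : ℂ} (hζ : 0 < ζ.re) (z : ℝ) :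
    ‖(ζ + z * Complex.I)⁻¹‖ ≤ ζ.re⁻¹ := by
  rw [norm_inv]
  gcongr
  simpa using Complex.re_le_norm (ζ + z * Complex.I)

theorem integrable_inv_add_mul_I_mul {ζ : ℂ} (hζ : 0 < ζ.re) (hφ : Integrable φ) :
    Integrable fun z : ℝ => (ζ + z * Complex.I)⁻¹ * φ z :=
  hφ.ofReal.bdd_mul (by fun_prop) (.of_forall (norm_inv_add_mul_I_le hζ))

theorem hasDerivAt_singleLayer_of_pos {M : ℝ} (w : ℝ) (hφ : Integrable φ)
    (hzφ : Integrable fun z => z * φ z) (hM : ∀ z, |φ z| ≤ M) (hx : 0 < x) :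
    HasDerivAt (singleLayer φ x)
      ((∫ z : ℝ, (x - w * Complex.I + z * Complex.I)⁻¹ * φ z).im / (2 * Real.pi)) w := by
  have hre (v : ℝ) : (x - v * Complex.I).re = x := by simp
  have him : (∫ z : ℝ, (x - w * Complex.I + z * Complex.I)⁻¹ * φ z).im / (2 * Real.pi)
      = ∫ z : ℝ, ((x - w * Complex.I + z * Complex.I)⁻¹).im / (2 * Real.pi) * φ z := by
    rw [← RCLike.im_eq_complex_im,
      ← integral_im (integrable_inv_add_mul_I_mul (by rwa [hre]) hφ), ← integral_div]
    refine integral_congr_ae (.of_forall fun z => ?_)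
    simp only [RCLike.im_eq_complex_im, Complex.im_mul_ofReal]
    ring
  rw [him]
  refine (hasDerivAt_integral_of_dominated_loc_of_deriv_le
    (F := fun w z => Efun2 (w - z) x * φ z)
    (F' := fun w z => ((x - w * Complex.I + z * Complex.I)⁻¹).im / (2 * Real.pi) * φ z)
    (bound := fun z => x⁻¹ / (2 * Real.pi) * |φ z|) univ_mem
    (.of_forall fun v => (measurable_Efun2_sub v x).aestronglyMeasurable.mul hφ.1)
    ((integrable_Efun2_dominator w x hφ hzφ hM).mono'
      ((measurable_Efun2_sub w x).aestronglyMeasurable.mul hφ.1) (norm_Efun2_mul_le w hx.le le_rfl))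
    ?_ (.of_forall fun z v _ => ?_) (hφ.norm.const_mul _) (.of_forall fun z v _ => ?_)).2
  · exact AEStronglyMeasurable.mul (by fun_prop) hφ.1
  · rw [norm_mul, norm_div, Real.norm_of_nonneg Real.two_pi_pos.le, Real.norm_eq_abs (φ z)]
    gcongr
    exact (Complex.abs_im_le_norm _).trans
      ((norm_inv_add_mul_I_le (by rwa [hre]) z).trans_eq (by rw [hre]))
  · have hE := (hasDerivAt_Efun2 (v - z) hx.ne').comp_sub_const v z
    rw [Complex.ofReal_sub, sub_mul, ← sub_add] at hE
    exact hE.mul_const (φ z)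

theorem tendsto_singleLayer {M : ℝ} (w : ℝ) (hφ : Integrable φ)
    (hzφ : Integrable fun z => z * φ z) (hM : ∀ z, |φ z| ≤ M) :
    Tendsto (fun x => singleLayer φ x w) (𝓝[>] 0) (𝓝 (singleLayer φ 0 w)) := by
  refine tendsto_integral_filter_of_dominated_convergence _
    (.of_forall fun x => (measurable_Efun2_sub w x).aestronglyMeasurable.mul hφ.1) ?_
    (integrable_Efun2_dominator w 1 hφ hzφ hM) ?_
  · filter_upwards [Ioo_mem_nhdsGT one_pos] with x hx
    exact norm_Efun2_mul_le w hx.1.le hx.2.le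
  · filter_upwards [ae_sub_ne_zero w] with z hz
    exact ((continuousAt_Efun2 hz 0).mono_left nhdsWithin_le_nhds).mul_const _

theorem hasDerivAt_singleLayer {F : ℝ → ℝ → ℝ} {M : ℝ} (hφ : Integrable φ)
    (hzφ : Integrable fun z => z * φ z) (hM : ∀ z, |φ z| ≤ M)
    (hF : ∀ y > 0, ∀ w, HasDerivAt (singleLayer φ y) (F y w) w)
    (hlim : TendstoUniformly F (F 0) (𝓝[>] 0)) (hx : 0 ≤ x) (w : ℝ) :
    HasDerivAt (singleLayer φ x) (F x w) w := by
  rcases hx.eq_or_lt with rfl | hx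
  · exact hasDerivAt_of_tendstoUniformly hlim (eventually_mem_nhdsWithin.mono hF)
      (fun v => tendsto_singleLayer v hφ hzφ hM) w
  · exact hF x hx w

end LogarithmicPotential

section GaussianDensity

variable {ζ : ℂ} {x t : ℝ}

theorem integrable_exp_neg_sq_div (ht : 0 < t) :
    Integrable fun z : ℝ => Real.exp (-z ^ 2 / (4 * t)) := by
  simpa only [neg_mul, mul_neg, div_eq_inv_mul] using
    integrable_exp_neg_mul_sq (b := (4 * t)⁻¹) (by positivity)

theorem integrable_mul_exp_neg_sq_div (ht : 0 < t) :
    Integrable fun z : ℝ => z * Real.exp (-z ^ 2 / (4 * t)) := by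
  simpa only [neg_mul, mul_neg, div_eq_inv_mul] using
    integrable_mul_exp_neg_mul_sq (b := (4 * t)⁻¹) (by positivity)

theorem abs_exp_neg_sq_div_le (ht : 0 < t) (z : ℝ) : |Real.exp (-z ^ 2 / (4 * t))| ≤ 1 := by
  rw [Real.abs_exp, Real.exp_le_one_iff]
  exact div_nonpos_of_nonpos_of_nonneg (by linarith [sq_nonneg z]) (by positivity)

theorem integral_exp_neg_add_mul_I_mul (hζ : 0 < ζ.re) (z : ℝ) :
    ∫ ξ in Ioi (0 : ℝ), Complex.exp (-(ζ + z * Complex.I) * ξ) = (ζ + z * Complex.I)⁻¹ := by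
  rw [integral_exp_mul_complex_Ioi (by simpa using hζ), Complex.ofReal_zero, mul_zero,
    Complex.exp_zero, neg_div_neg_eq, one_div]

theorem integral_exp_neg_add_mul_I_mul_gaussian (ζ : ℂ) (ht : 0 < t) (ξ : ℝ) :
    ∫ z : ℝ, Complex.exp (-(ζ + z * Complex.I) * ξ) * Real.exp (-z ^ 2 / (4 * t))
      = √(4 * Real.pi * t) * gaussLaplaceKernel 0 ζ t ξ := by
  have ht' : (t : ℂ) ≠ 0 := mod_cast ht.ne'
  have hb : 0 < ((1 / (4 * t) : ℝ) : ℂ).re := by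
    rw [Complex.ofReal_re]
    positivity
  have hroot : ((Real.pi : ℂ) / ((1 / (4 * t) : ℝ) : ℂ)) ^ (1 / 2 : ℂ) = √(4 * Real.pi * t) := by
    rw [Real.sqrt_eq_rpow, Complex.ofReal_cpow (by positivity)]
    congr 1 <;> push_cast <;> field_simp
  have hsplit (z : ℝ) :
      Complex.exp (-(ζ + z * Complex.I) * ξ) * Real.exp (-z ^ 2 / (4 * t)) =
        Complex.exp (-ξ * ζ) * (Complex.exp (Complex.I * -ξ * z) *
          Complex.exp (-((1 / (4 * t) : ℝ) : ℂ) * z ^ 2)) := by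
    rw [Complex.ofReal_exp, ← Complex.exp_add, ← Complex.exp_add, ← Complex.exp_add]
    congr 1
    push_cast
    ring
  simp only [hsplit]
  rw [integral_const_mul, fourierIntegral_gaussian hb, hroot, mul_left_comm, ← Complex.exp_add,
    gaussLaplaceKernel, pow_zero, one_mul]
  congr 2
  push_cast
  field_simp
  ring

theorem integrable_exp_neg_add_mul_I_mul_gaussian (hζ : 0 < ζ.re) (ht : 0 < t) :
    Integrable (Function.uncurry fun z ξ : ℝ =>
        Complex.exp (-(ζ + z * Complex.I) * ξ) * Real.exp (-z ^ 2 / (4 * t)))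
      (volume.prod (volume.restrict (Ioi 0))) := by
  refine ((integrable_exp_neg_sq_div ht).mul_prod (exp_neg_integrableOn_Ioi 0 hζ)).mono'
    (by unfold Function.uncurry; fun_prop) (.of_forall fun p => le_of_eq ?_)
  rw [Function.uncurry, norm_mul, Complex.norm_exp, Complex.norm_of_nonneg (Real.exp_nonneg _),
    mul_comm]
  simp

theorem integral_inv_add_mul_I_mul_gaussian (hζ : 0 < ζ.re) (ht : 0 < t) :
    ∫ z : ℝ, (ζ + z * Complex.I)⁻¹ * (Real.exp (-z ^ 2 / (4 * t)) : ℝ)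
      = √(4 * Real.pi * t) * gaussLaplace 0 ζ t := by
  simp only [← integral_exp_neg_add_mul_I_mul hζ, ← integral_mul_const]
  rw [integral_integral_swap (integrable_exp_neg_add_mul_I_mul_gaussian hζ ht)]
  simp only [integral_exp_neg_add_mul_I_mul_gaussian ζ ht, integral_const_mul, gaussLaplace]

theorem exists_norm_gaussLaplace_sub_le (n : ℕ) (ht : 0 < t) :
    ∃ C, ∀ ζ η : ℂ, 0 ≤ ζ.re → 0 ≤ η.re →
      ‖gaussLaplace n η t - gaussLaplace n ζ t‖ ≤ C * ‖η - ζ‖ := by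
  obtain ⟨C, -, hC⟩ := exists_sqrt_pow_mul_norm_gaussLaplace_le (n + 1)
  refine ⟨C / √t ^ (n + 2), fun ζ η hζ hη =>
    Convex.norm_image_sub_le_of_norm_hasDerivWithin_le (s := {z : ℂ | 0 ≤ z.re})
      (fun z _ => (hasDerivAt_gaussLaplace n z ht).hasDerivWithinAt) (fun z hz => ?_)
      (convex_halfSpace_re_ge 0) hζ hη⟩
  rw [norm_neg, le_div_iff₀' (by positivity)]
  exact hC z t hz ht

theorem tendstoUniformly_gaussLaplace_im (n : ℕ) (ht : 0 < t) (K : ℝ) :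
    TendstoUniformly (fun x w : ℝ => K * (gaussLaplace n (x - w * Complex.I) t).im)
      (fun w => K * (gaussLaplace n ((0 : ℝ) - w * Complex.I) t).im) (𝓝[>] 0) := by
  obtain ⟨C, hC⟩ := exists_norm_gaussLaplace_sub_le n ht
  rw [Metric.tendstoUniformly_iff]
  intro ε hε
  have hlim : Tendsto (fun x : ℝ => |K| * (C * ‖x‖)) (𝓝[>] 0) (𝓝 0) := by
    refine Tendsto.mono_left ?_ nhdsWithin_le_nhds
    simpa using Continuous.tendsto (f := fun x : ℝ => |K| * (C * ‖x‖)) (by fun_prop) 0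
  filter_upwards [hlim.eventually_lt_const hε, eventually_mem_nhdsWithin] with x hxε hx w
  rw [dist_comm, Real.dist_eq, ← mul_sub, abs_mul, ← Complex.sub_im]
  refine lt_of_le_of_lt ?_ hxε
  gcongr
  refine (Complex.abs_im_le_norm _).trans ((hC _ _ (by simp) (by simpa using hx.le)).trans_eq ?_)
  simp

theorem hasDerivAt_singleLayer_gaussian (w : ℝ) (hx : 0 ≤ x) (ht : 0 < t) :
    HasDerivAt (singleLayer (fun z => Real.exp (-z ^ 2 / (4 * t))) x)
      (√(4 * Real.pi * t) / (2 * Real.pi) * (gaussLaplace 0 (x - w * Complex.I) t).im) w := by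
  have hφ := integrable_exp_neg_sq_div ht
  have hzφ := integrable_mul_exp_neg_sq_div ht
  refine hasDerivAt_singleLayer hφ hzφ (abs_exp_neg_sq_div_le ht) (fun y hy v => ?_)
    (tendstoUniformly_gaussLaplace_im 0 ht _) hx w
  have h := hasDerivAt_singleLayer_of_pos v hφ hzφ (abs_exp_neg_sq_div_le ht) hy
  rwa [integral_inv_add_mul_I_mul_gaussian (by simpa using hy) ht, Complex.im_ofReal_mul,
    mul_div_right_comm] at h

end GaussianDensity

section PressureSymbols

variable {a n N : ℕ} {r κ c t : ℝ} {f : ℂ → ℝ → ℝ → ℂ}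

/-- The building blocks `yᵃ tʳ e^{-y²/(4t)} Fₙ(ζ, t)`, with `Fₙ = gaussLaplace n`, of the
derivatives of the pressure tensor, where `ζ = x₂ + (y₁ - x₁) i` and `y = y₂`. -/
noncomputable def pressureTerm (a n : ℕ) (r : ℝ) (ζ : ℂ) (y t : ℝ) : ℂ :=
  ((y ^ a * t ^ r * Real.exp (-y ^ 2 / (4 * t)) : ℝ) : ℂ) * gaussLaplace n ζ t

/-- The linear combinations of building blocks that are bounded by
`t ^ κ * (‖ζ + y‖ ^ 2 + t) ^ (-(1 + N) / 2)` times a Gaussian in `y / √t`. -/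
noncomputable def pressureSymbols (N : ℕ) (κ : ℝ) : Submodule ℂ (ℂ → ℝ → ℝ → ℂ) :=
  Submodule.span ℂ
    {f | ∃ (a n : ℕ) (r : ℝ), N ≤ n ∧ (a / 2 + r - (n - N) / 2 : ℝ) = κ ∧ pressureTerm a n r = f}

theorem pressureTerm_mem_pressureSymbols (hN : N ≤ n) (hκ : (a / 2 + r - (n - N) / 2 : ℝ) = κ) :
    pressureTerm a n r ∈ pressureSymbols N κ :=
  Submodule.subset_span ⟨a, n, r, hN, hκ, rfl⟩

theorem hasDerivAt_pressureTerm_left (a n : ℕ) (r : ℝ) (ζ : ℂ) (y : ℝ) (ht : 0 < t) :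
    HasDerivAt (fun z => pressureTerm a n r z y t) ((-pressureTerm a (n + 1) r) ζ y t) ζ :=
  ((hasDerivAt_gaussLaplace n ζ ht).const_mul _).congr_deriv (mul_neg _ _)

theorem hasDerivAt_exp_neg_sq_div (y t : ℝ) :
    HasDerivAt (fun b => Real.exp (-b ^ 2 / (4 * t)))
      (-(y / (2 * t)) * Real.exp (-y ^ 2 / (4 * t))) y := by
  have hphase : HasDerivAt (fun b : ℝ => -b ^ 2 / (4 * t)) (-(y / (2 * t))) y :=
    ((hasDerivAt_pow 2 y).neg.div_const (4 * t)).congr_deriv (by push_cast; field_simp; ring)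
  exact hphase.exp.congr_deriv (mul_comm _ _)

theorem hasDerivAt_exp_neg_sq_div_time (y : ℝ) (ht : t ≠ 0) :
    HasDerivAt (fun s => Real.exp (-y ^ 2 / (4 * s)))
      (y ^ 2 / (4 * t ^ 2) * Real.exp (-y ^ 2 / (4 * t))) t := by
  have hphase : HasDerivAt (fun s : ℝ => -y ^ 2 / (4 * s)) (y ^ 2 / (4 * t ^ 2)) t :=
    ((hasDerivAt_const t (-y ^ 2)).div ((hasDerivAt_id t).const_mul 4)
      (by simpa using ht)).congr_deriv (by simp; field_simp)
  exact hphase.exp.congr_deriv (mul_comm _ _)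

theorem hasDerivAt_pressureTerm_mid (a n : ℕ) (r : ℝ) (ζ : ℂ) (y : ℝ) (ht : 0 < t) :
    HasDerivAt (fun b => pressureTerm a n r ζ b t)
      (((a : ℂ) • pressureTerm (a - 1) n r - (2⁻¹ : ℂ) • pressureTerm (a + 1) n (r - 1)) ζ y t)
      y := by
  have hcoeff := ((hasDerivAt_pow a y).mul_const (t ^ r)).mul (hasDerivAt_exp_neg_sq_div y t)
  refine (hcoeff.ofReal_comp.mul_const (gaussLaplace n ζ t)).congr_deriv ?_
  simp only [pressureTerm, Pi.sub_apply, Pi.smul_apply, smul_eq_mul, Real.rpow_sub_one ht.ne' r]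
  push_cast
  ring

theorem hasDerivAt_pressureTerm_time (a n : ℕ) (r : ℝ) (ζ : ℂ) (y : ℝ) (ht : 0 < t) :
    HasDerivAt (pressureTerm a n r ζ y)
      (((r : ℂ) • pressureTerm a n (r - 1) + (4⁻¹ : ℂ) • pressureTerm (a + 2) n (r - 2)
        - pressureTerm a (n + 2) r) ζ y t) t := by
  have hcoeff := ((Real.hasDerivAt_rpow_const (p := r) (.inl ht.ne')).const_mul (y ^ a)).mul
    (hasDerivAt_exp_neg_sq_div_time y ht.ne')
  have hr : t ^ (r - 2) = t ^ r / t / t := by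
    rw [← Real.rpow_sub_one ht.ne', ← Real.rpow_sub_one ht.ne', sub_sub, one_add_one_eq_two]
  refine (hcoeff.ofReal_comp.mul (hasDerivAt_gaussLaplace_time n ζ ht)).congr_deriv ?_
  simp only [pressureTerm, Pi.sub_apply, Pi.add_apply, Pi.smul_apply, smul_eq_mul, Pi.mul_apply,
    Real.rpow_sub_one ht.ne' r, hr]
  push_cast
  ring

theorem exists_hasDerivAt_pressureTerm (hN : N ≤ n) (hκ : (a / 2 + r - (n - N) / 2 : ℝ) = κ) :
    ∃ fζ ∈ pressureSymbols (N + 1) κ, ∃ fy ∈ pressureSymbols N (κ - 1 / 2),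
      ∃ ft ∈ pressureSymbols N (κ - 1), ∀ (ζ : ℂ) (y t : ℝ), 0 < t →
        HasDerivAt (fun z => pressureTerm a n r z y t) (fζ ζ y t) ζ ∧
        HasDerivAt (fun b => pressureTerm a n r ζ b t) (fy ζ y t) y ∧
        HasDerivAt (pressureTerm a n r ζ y) (ft ζ y t) t := by
  have hlower : (a : ℂ) • pressureTerm (a - 1) n r ∈ pressureSymbols N (κ - 1 / 2) := by
    rcases a with _ | a
    · simp
    · refine Submodule.smul_mem _ _ (pressureTerm_mem_pressureSymbols hN ?_)
      rw [← hκ]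
      push_cast
      ring
  refine ⟨_, Submodule.neg_mem _ (pressureTerm_mem_pressureSymbols (by lia) ?_),
    _, Submodule.sub_mem _ hlower
      (Submodule.smul_mem _ _ (pressureTerm_mem_pressureSymbols hN ?_)),
    _, Submodule.sub_mem _ (Submodule.add_mem _
      (Submodule.smul_mem _ _ (pressureTerm_mem_pressureSymbols hN ?_))
      (Submodule.smul_mem _ _ (pressureTerm_mem_pressureSymbols hN ?_)))
      (pressureTerm_mem_pressureSymbols (by lia) ?_),
    fun ζ y t ht => ⟨hasDerivAt_pressureTerm_left a n r ζ y ht,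
      hasDerivAt_pressureTerm_mid a n r ζ y ht, hasDerivAt_pressureTerm_time a n r ζ y ht⟩⟩
  all_goals
    rw [← hκ]
    push_cast
    ring

theorem exists_hasDerivAt_of_mem_pressureSymbols (hf : f ∈ pressureSymbols N κ) :
    ∃ fζ ∈ pressureSymbols (N + 1) κ, ∃ fy ∈ pressureSymbols N (κ - 1 / 2),
      ∃ ft ∈ pressureSymbols N (κ - 1), ∀ (ζ : ℂ) (y t : ℝ), 0 < t →
        HasDerivAt (fun z => f z y t) (fζ ζ y t) ζ ∧
        HasDerivAt (fun b => f ζ b t) (fy ζ y t) y ∧ HasDerivAt (f ζ y) (ft ζ y t) t := by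
  induction hf using Submodule.span_induction with
  | mem f hf =>
    obtain ⟨a, n, r, hN, hκ, rfl⟩ := hf
    exact exists_hasDerivAt_pressureTerm hN hκ
  | zero =>
    exact ⟨0, zero_mem _, 0, zero_mem _, 0, zero_mem _, fun ζ y t _ =>
      ⟨hasDerivAt_const _ _, hasDerivAt_const _ _, hasDerivAt_const _ _⟩⟩
  | add f g _ _ hf hg =>
    obtain ⟨fζ, hfζ, fy, hfy, ft, hft, hf⟩ := hf
    obtain ⟨gζ, hgζ, gy, hgy, gt, hgt, hg⟩ := hg
    refine ⟨_, add_mem hfζ hgζ, _, add_mem hfy hgy, _, add_mem hft hgt, fun ζ y t ht => ?_⟩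
    obtain ⟨hf₁, hf₂, hf₃⟩ := hf ζ y t ht
    obtain ⟨hg₁, hg₂, hg₃⟩ := hg ζ y t ht
    exact ⟨hf₁.add hg₁, hf₂.add hg₂, hf₃.add hg₃⟩
  | smul c f _ hf =>
    obtain ⟨fζ, hfζ, fy, hfy, ft, hft, hf⟩ := hf
    refine ⟨_, Submodule.smul_mem _ c hfζ, _, Submodule.smul_mem _ c hfy,
      _, Submodule.smul_mem _ c hft, fun ζ y t ht => ?_⟩
    obtain ⟨hf₁, hf₂, hf₃⟩ := hf ζ y t ht
    exact ⟨hf₁.const_smul c, hf₂.const_smul c, hf₃.const_smul c⟩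

theorem exists_one_add_rpow_le_exp {p ε : ℝ} (hp : 0 < p) (hε : 0 < ε) :
    ∃ C, ∀ u ≥ 0, (1 + u) ^ p ≤ C * Real.exp (ε * u) := by
  refine ⟨(1 + p / ε) ^ p, fun u hu => ?_⟩
  have hlin : 1 + u ≤ (1 + p / ε) * Real.exp (ε / p * u) := by
    calc 1 + u ≤ (1 + p / ε) * (ε / p * u + 1) := by
          field_simp
          nlinarith [mul_nonneg hε.le hu, mul_pos hp hε]
      _ ≤ (1 + p / ε) * Real.exp (ε / p * u) := by
          gcongr
          exact Real.add_one_le_exp _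
  calc (1 + u) ^ p ≤ ((1 + p / ε) * Real.exp (ε / p * u)) ^ p := by gcongr
    _ = (1 + p / ε) ^ p * Real.exp (ε * u) := by
        rw [Real.mul_rpow (by positivity) (by positivity), ← Real.exp_mul]
        congr 2
        field_simp

theorem abs_pow_le_rpow_mul_one_add_rpow (a : ℕ) (y : ℝ) (ht : 0 < t) :
    |y| ^ a ≤ t ^ (a / 2 : ℝ) * (1 + y ^ 2 / t) ^ (a / 2 : ℝ) := by
  have hsq : y ^ 2 ≤ t * (1 + y ^ 2 / t) := by
    rw [mul_add, mul_div_cancel₀ _ ht.ne']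
    linarith
  calc |y| ^ a = (y ^ 2) ^ (a / 2 : ℝ) := by
        rw [← sq_abs, ← Real.rpow_natCast_mul (abs_nonneg y), ← Real.rpow_natCast]
        congr 1
        push_cast
        ring
    _ ≤ (t * (1 + y ^ 2 / t)) ^ (a / 2 : ℝ) := by gcongr
    _ = t ^ (a / 2 : ℝ) * (1 + y ^ 2 / t) ^ (a / 2 : ℝ) := Real.mul_rpow ht.le (by positivity)

theorem norm_add_sq_add_le {E : Type*} [SeminormedAddCommGroup E] (v w : E) (ht : 0 < t) :
    ‖v + w‖ ^ 2 + t ≤ 2 * (1 + ‖w‖ ^ 2 / t) * (‖v‖ ^ 2 + t) := by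
  have hsq : ‖v + w‖ ^ 2 ≤ 2 * (‖v‖ ^ 2 + ‖w‖ ^ 2) :=
    (pow_le_pow_left₀ (norm_nonneg _) (norm_add_le v w) 2).trans add_sq_le
  have hexpand : 2 * (1 + ‖w‖ ^ 2 / t) * (‖v‖ ^ 2 + t)
      = 2 * (‖v‖ ^ 2 + ‖w‖ ^ 2) + 2 * t + 2 * (‖w‖ ^ 2 / t * ‖v‖ ^ 2) := by
    field_simp
    ring
  linarith [show 0 ≤ ‖w‖ ^ 2 / t * ‖v‖ ^ 2 by positivity]

theorem norm_sq_add_rpow_neg_le {E : Type*} [SeminormedAddCommGroup E] {q : ℝ} (hq : 0 ≤ q)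
    (v w : E) (ht : 0 < t) :
    (‖v‖ ^ 2 + t) ^ (-q) ≤ 2 ^ q * (1 + ‖w‖ ^ 2 / t) ^ q * (‖v + w‖ ^ 2 + t) ^ (-q) := by
  rw [Real.rpow_neg (by positivity), Real.rpow_neg (by positivity), ← div_eq_mul_inv,
    inv_le_comm₀ (by positivity) (by positivity), inv_div, div_le_iff₀' (by positivity),
    ← Real.mul_rpow (by positivity) (by positivity),
    ← Real.mul_rpow (by positivity) (by positivity)]
  exact Real.rpow_le_rpow (by positivity) (norm_add_sq_add_le v w ht) hq

theorem norm_pressureTerm (a n : ℕ) (r : ℝ) (ζ : ℂ) (y : ℝ) (ht : 0 < t) :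
    ‖pressureTerm a n r ζ y t‖ =
      |y| ^ a * t ^ r * Real.exp (-y ^ 2 / (4 * t)) * ‖gaussLaplace n ζ t‖ := by
  rw [pressureTerm, norm_mul, Complex.norm_real, norm_mul, norm_mul, norm_pow, Real.norm_eq_abs,
    Real.norm_of_nonneg (Real.rpow_nonneg ht.le r), Real.norm_of_nonneg (Real.exp_nonneg _)]

theorem exists_norm_pressureTerm_le (hN : N ≤ n) (hκ : (a / 2 + r - (n - N) / 2 : ℝ) = κ)
    (hc : c < 1 / 4) :
    ∃ C, ∀ (ζ : ℂ) (y t : ℝ), 0 ≤ ζ.re → 0 < t → ‖pressureTerm a n r ζ y t‖ ≤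
      C * t ^ κ * (‖ζ + y‖ ^ 2 + t) ^ (-((1 + N : ℝ) / 2)) * Real.exp (-c * y ^ 2 / t) := by
  obtain ⟨C₁, hC₁, hle₁⟩ := exists_norm_gaussLaplace_le_of_le hN
  obtain ⟨C₂, hle₂⟩ := exists_one_add_rpow_le_exp
    (p := a / 2 + (1 + N) / 2) (by positivity) (sub_pos.2 hc)
  set q : ℝ := (1 + N) / 2
  refine ⟨C₁ * 2 ^ q * C₂, fun ζ y t hζ ht => ?_⟩
  set u := y ^ 2 / t with hu
  set X := (‖ζ + y‖ ^ 2 + t) ^ (-q)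
  have hexp : Real.exp (-c * y ^ 2 / t) =
      Real.exp ((1 / 4 - c) * u) * Real.exp (-y ^ 2 / (4 * t)) := by
    rw [← Real.exp_add, hu]
    congr 1
    field_simp
    ring
  have htκ : t ^ κ = t ^ (a / 2 : ℝ) * t ^ r * t ^ (-((n - N) / 2 : ℝ)) := by
    rw [← Real.rpow_add ht, ← Real.rpow_add ht, ← hκ, sub_eq_add_neg]
  have hζX : (‖ζ‖ ^ 2 + t) ^ (-q) ≤ 2 ^ q * (1 + u) ^ q * X := by
    simpa [u] using norm_sq_add_rpow_neg_le (q := q) (by positivity) ζ (y : ℂ) ht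
  calc ‖pressureTerm a n r ζ y t‖
      = |y| ^ a * t ^ r * Real.exp (-y ^ 2 / (4 * t)) * ‖gaussLaplace n ζ t‖ :=
        norm_pressureTerm a n r ζ y ht
    _ ≤ t ^ (a / 2 : ℝ) * (1 + u) ^ (a / 2 : ℝ) * t ^ r * Real.exp (-y ^ 2 / (4 * t)) *
          (C₁ * t ^ (-((n - N) / 2 : ℝ)) * (2 ^ q * (1 + u) ^ q * X)) := by
        gcongr
        · exact abs_pow_le_rpow_mul_one_add_rpow a y ht
        · exact (hle₁ ζ t hζ ht).trans (by gcongr)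
    _ = C₁ * 2 ^ q * (1 + u) ^ (a / 2 + q) * t ^ κ * X * Real.exp (-y ^ 2 / (4 * t)) := by
        rw [htκ, Real.rpow_add (by positivity)]
        ring
    _ ≤ C₁ * 2 ^ q * (C₂ * Real.exp ((1 / 4 - c) * u)) * t ^ κ * X *
          Real.exp (-y ^ 2 / (4 * t)) := by
        gcongr
        exact hle₂ u (by positivity)
    _ = C₁ * 2 ^ q * C₂ * t ^ κ * X * Real.exp (-c * y ^ 2 / t) := by
        rw [hexp]
        ring

theorem exists_norm_le_of_mem_pressureSymbols (hf : f ∈ pressureSymbols N κ) (hc : c < 1 / 4) :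
    ∃ C, ∀ (ζ : ℂ) (y t : ℝ), 0 ≤ ζ.re → 0 < t → ‖f ζ y t‖ ≤
      C * t ^ κ * (‖ζ + y‖ ^ 2 + t) ^ (-((1 + N : ℝ) / 2)) * Real.exp (-c * y ^ 2 / t) := by
  induction hf using Submodule.span_induction with
  | mem f hf =>
    obtain ⟨a, n, r, hN, hκ, rfl⟩ := hf
    exact exists_norm_pressureTerm_le hN hκ hc
  | zero => exact ⟨0, by simp⟩
  | add f g _ _ hf hg =>
    obtain ⟨C₁, hf⟩ := hf
    obtain ⟨C₂, hg⟩ := hg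
    refine ⟨C₁ + C₂, fun ζ y t hζ ht =>
      (norm_add_le_of_le (hf ζ y t hζ ht) (hg ζ y t hζ ht)).trans_eq ?_⟩
    ring
  | smul z f _ hf =>
    obtain ⟨C, hf⟩ := hf
    refine ⟨‖z‖ * C, fun ζ y t hζ ht => ?_⟩
    rw [Pi.smul_apply, Pi.smul_apply, Pi.smul_apply, norm_smul, mul_assoc ‖z‖, mul_assoc ‖z‖,
      mul_assoc ‖z‖]
    gcongr
    exact hf ζ y t hζ ht

end PressureSymbols

section PressureTensor

variable {v : ℝ → ℝ → ℝ → ℝ → ℝ → ℝ} {N : ℕ} {κ c t x₂ : ℝ}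

/-- `v` agrees with the real part of an element of `pressureSymbols N κ`, except that it may vanish
instead. The exception absorbs the values of `deriv` on the boundary `x₂ = 0`: there the two-sided
derivative sees the kink of `Pten`, which is even in `x₂`, and is then `0` by convention. -/
def HasPressureSymbol (v : ℝ → ℝ → ℝ → ℝ → ℝ → ℝ) (N : ℕ) (κ : ℝ) : Prop :=
  ∃ f ∈ pressureSymbols N κ, ∀ x₁ x₂ y₁ y₂ t : ℝ, 0 ≤ x₂ → 0 < t →
    v x₁ x₂ y₁ y₂ t = 0 ∨ v x₁ x₂ y₁ y₂ t = (f (x₂ + (y₁ - x₁) * Complex.I) y₂ t).re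

theorem hasDerivAt_re {g : ℝ → ℂ} {g' : ℂ} {x : ℝ} (h : HasDerivAt g g' x) :
    HasDerivAt (fun y => (g y).re) g'.re x :=
  Complex.reCLM.hasFDerivAt.comp_hasDerivAt x h

namespace HasPressureSymbol

theorem dX1 (h : HasPressureSymbol v N κ) : HasPressureSymbol (DX1 v) (N + 1) κ := by
  obtain ⟨f, hf, hv⟩ := h
  obtain ⟨f', hf', _, _, _, _, hderiv⟩ := exists_hasDerivAt_of_mem_pressureSymbols hf
  refine ⟨-Complex.I • f', Submodule.smul_mem _ _ hf', fun x₁ x₂ y₁ y₂ t hx ht =>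
    deriv_eq_zero_or_eq_of_eventually (.of_forall fun s => hv s x₂ y₁ y₂ t hx ht)
      (hasDerivAt_re ?_)⟩
  have hcurve : HasDerivAt (fun s : ℝ => (x₂ + (y₁ - s) * Complex.I : ℂ)) (-Complex.I) x₁ := by
    simpa using (((hasDerivAt_id x₁).ofReal_comp.const_sub (y₁ : ℂ)).mul_const Complex.I).const_add
      (x₂ : ℂ)
  exact (hderiv _ y₂ t ht).1.scomp x₁ hcurve

theorem dX2 (h : HasPressureSymbol v N κ) : HasPressureSymbol (DX2 v) (N + 1) κ := by
  obtain ⟨f, hf, hv⟩ := h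
  obtain ⟨f', hf', _, _, _, _, hderiv⟩ := exists_hasDerivAt_of_mem_pressureSymbols hf
  refine ⟨f', hf', fun x₁ x₂ y₁ y₂ t hx ht => deriv_eq_zero_or_eq_of_eventually
    (eventually_nhdsWithin_of_forall fun s hs => hv x₁ s y₁ y₂ t (hx.trans (mem_Ioi.1 hs).le) ht)
    (hasDerivAt_re ?_)⟩
  have hcurve : HasDerivAt (fun s : ℝ => (s + (y₁ - x₁) * Complex.I : ℂ)) 1 x₂ :=
    (hasDerivAt_id x₂).ofReal_comp.add_const _
  exact ((hderiv _ y₂ t ht).1.scomp x₂ hcurve).congr_deriv (one_smul ℂ _)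

theorem dY1 (h : HasPressureSymbol v N κ) : HasPressureSymbol (DY1 v) (N + 1) κ := by
  obtain ⟨f, hf, hv⟩ := h
  obtain ⟨f', hf', _, _, _, _, hderiv⟩ := exists_hasDerivAt_of_mem_pressureSymbols hf
  refine ⟨Complex.I • f', Submodule.smul_mem _ _ hf', fun x₁ x₂ y₁ y₂ t hx ht =>
    deriv_eq_zero_or_eq_of_eventually (.of_forall fun s => hv x₁ x₂ s y₂ t hx ht)
      (hasDerivAt_re ?_)⟩
  have hcurve : HasDerivAt (fun s : ℝ => (x₂ + (s - x₁) * Complex.I : ℂ)) Complex.I y₁ := by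
    simpa using (((hasDerivAt_id y₁).ofReal_comp.sub_const (x₁ : ℂ)).mul_const Complex.I).const_add
      (x₂ : ℂ)
  exact (hderiv _ y₂ t ht).1.scomp y₁ hcurve

theorem dY2 (h : HasPressureSymbol v N κ) : HasPressureSymbol (DY2 v) N (κ - 1 / 2) := by
  obtain ⟨f, hf, hv⟩ := h
  obtain ⟨_, _, f', hf', _, _, hderiv⟩ := exists_hasDerivAt_of_mem_pressureSymbols hf
  exact ⟨f', hf', fun x₁ x₂ y₁ y₂ t hx ht => deriv_eq_zero_or_eq_of_eventually
    (.of_forall fun s => hv x₁ x₂ y₁ s t hx ht) (hasDerivAt_re (hderiv _ y₂ t ht).2.1)⟩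

theorem dT (h : HasPressureSymbol v N κ) : HasPressureSymbol (DT v) N (κ - 1) := by
  obtain ⟨f, hf, hv⟩ := h
  obtain ⟨_, _, _, _, f', hf', hderiv⟩ := exists_hasDerivAt_of_mem_pressureSymbols hf
  exact ⟨f', hf', fun x₁ x₂ y₁ y₂ t hx ht => deriv_eq_zero_or_eq_of_eventually
    (eventually_nhdsWithin_of_forall fun s hs => hv x₁ x₂ y₁ y₂ s hx (ht.trans hs))
    (hasDerivAt_re (hderiv _ y₂ t ht).2.2)⟩

theorem iterate {D : (ℝ → ℝ → ℝ → ℝ → ℝ → ℝ) → ℝ → ℝ → ℝ → ℝ → ℝ → ℝ} {p : ℕ} {δ : ℝ}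
    (hD : ∀ {v N κ}, HasPressureSymbol v N κ → HasPressureSymbol (D v) (N + p) (κ - δ))
    (h : HasPressureSymbol v N κ) (k : ℕ) :
    HasPressureSymbol (D^[k] v) (N + k * p) (κ - k * δ) := by
  induction k with
  | zero => simpa using h
  | succ k ih =>
    rw [Function.iterate_succ_apply']
    convert hD ih using 1
    · ring
    · push_cast
      ring

theorem exists_abs_le (h : HasPressureSymbol v N κ) (hc : c < 1 / 4) :
    ∃ C > 0, ∀ x₁ x₂ y₁ y₂ t : ℝ, 0 ≤ x₂ → 0 < t → |v x₁ x₂ y₁ y₂ t| ≤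
      C * t ^ κ * ((x₁ - y₁) ^ 2 + (x₂ + y₂) ^ 2 + t) ^ (-((1 + N : ℝ) / 2)) *
        Real.exp (-c * y₂ ^ 2 / t) := by
  obtain ⟨f, hf, hv⟩ := h
  obtain ⟨C, hle⟩ := exists_norm_le_of_mem_pressureSymbols hf hc
  refine ⟨max C 1, by positivity, fun x₁ x₂ y₁ y₂ t hx ht => ?_⟩
  have hnorm : ‖(x₂ + (y₁ - x₁) * Complex.I + y₂ : ℂ)‖ ^ 2 = (x₁ - y₁) ^ 2 + (x₂ + y₂) ^ 2 := by
    rw [show (x₂ + (y₁ - x₁) * Complex.I + y₂ : ℂ) = (x₂ + y₂ : ℝ) + (y₁ - x₁ : ℝ) * Complex.I by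
      push_cast; ring, Complex.sq_norm, Complex.normSq_add_mul_I]
    ring
  have hle := hle (x₂ + (y₁ - x₁) * Complex.I) y₂ t (by simpa using hx) ht
  rw [hnorm] at hle
  rcases hv x₁ x₂ y₁ y₂ t hx ht with h | h
  · rw [h, abs_zero]
    positivity
  · rw [h]
    refine (Complex.abs_re_le_norm _).trans (hle.trans ?_)
    gcongr
    exact le_max_left C 1

end HasPressureSymbol

theorem deriv_heatK (z y t : ℝ) :
    deriv (fun b => heatK z b t) y = (4 * Real.pi * t)⁻¹ * (-(y / (2 * t))) *
      Real.exp (-y ^ 2 / (4 * t)) * Real.exp (-z ^ 2 / (4 * t)) := by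
  have hsplit : (fun b => heatK z b t) = fun b =>
      (4 * Real.pi * t)⁻¹ * Real.exp (-z ^ 2 / (4 * t)) * Real.exp (-b ^ 2 / (4 * t)) := by
    funext b
    rw [heatK, neg_add, add_div, Real.exp_add, ← mul_assoc]
  rw [hsplit, ((hasDerivAt_exp_neg_sq_div y t).const_mul _).deriv]
  ring

theorem integral_Efun2_mul_deriv_heatK (a x₂ y₁ y₂ t : ℝ) :
    ∫ z, Efun2 (a - z) x₂ * deriv (fun b => heatK (z - y₁) b t) y₂ =
      (4 * Real.pi * t)⁻¹ * (-(y₂ / (2 * t))) * Real.exp (-y₂ ^ 2 / (4 * t)) *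
        singleLayer (fun z => Real.exp (-z ^ 2 / (4 * t))) x₂ (a - y₁) := by
  rw [← integral_add_right_eq_self _ y₁, singleLayer, ← integral_const_mul]
  congr with z
  rw [add_sub_cancel_right, deriv_heatK, sub_sub, add_comm y₁]
  ring

theorem Pten_eq (x₁ y₁ y₂ : ℝ) (hx : 0 ≤ x₂) (ht : 0 < t) :
    Pten x₁ x₂ y₁ y₂ t = -y₂ / (2 * Real.pi * √Real.pi) * t ^ (-(3 / 2) : ℝ) *
      Real.exp (-y₂ ^ 2 / (4 * t)) * (gaussLaplace 0 (x₂ + (y₁ - x₁) * Complex.I) t).im := by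
  have hpow : t ^ (-(3 / 2) : ℝ) = √t / t ^ 2 := by
    rw [Real.sqrt_eq_rpow, ← Real.rpow_natCast, ← Real.rpow_sub ht]
    norm_num
  have hζ : (x₂ - (x₁ - y₁ : ℝ) * Complex.I : ℂ) = x₂ + (y₁ - x₁) * Complex.I := by
    push_cast
    ring
  have hsqrt : √(4 * Real.pi * t) = 2 * √Real.pi * √t := by
    rw [Real.sqrt_mul (by positivity), Real.sqrt_mul zero_le_four,
      show (4 : ℝ) = 2 ^ 2 by norm_num, Real.sqrt_sq zero_le_two]
  simp only [Pten, integral_Efun2_mul_deriv_heatK]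
  rw [(((hasDerivAt_singleLayer_gaussian (x₁ - y₁) hx ht).comp_sub_const x₁ y₁).const_mul _).deriv,
    hζ, hpow, hsqrt]
  field_simp
  rw [Real.sq_sqrt Real.pi_pos.le]
  ring

theorem hasPressureSymbol_Pten : HasPressureSymbol Pten 0 (-1) := by
  refine ⟨(((2 * Real.pi * √Real.pi)⁻¹ : ℝ) * Complex.I : ℂ) • pressureTerm 1 0 (-(3 / 2)),
    Submodule.smul_mem _ _ (pressureTerm_mem_pressureSymbols le_rfl (by norm_num)),
    fun x₁ x₂ y₁ y₂ t hx ht => .inr ?_⟩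
  rw [Pten_eq x₁ y₁ y₂ hx ht]
  simp only [Pi.smul_apply, smul_eq_mul, pressureTerm]
  rw [mul_assoc (Complex.ofReal _) Complex.I, Complex.re_ofReal_mul, Complex.I_mul_re,
    Complex.im_ofReal_mul]
  ring

end PressureTensor

theorem stmt18_general {c : ℝ} (hc : c < 1 / 4) (s k₁ k₂ m₁ m₂ : ℕ) :
    ∃ C > (0 : ℝ), ∀ x₁ x₂ y₁ y₂ t : ℝ, 0 ≤ x₂ → 0 < t →
      |(DT^[s] (DX1^[k₁] (DX2^[k₂] (DY1^[m₁] (DY2^[m₂] Pten))))) x₁ x₂ y₁ y₂ t|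
        ≤ C * t ^ (-1 - (s : ℝ) - (m₂ : ℝ) / 2)
            * ((x₁ - y₁) ^ 2 + (x₂ + y₂) ^ 2 + t)
                ^ (-((1 + (k₁ : ℝ) + (k₂ : ℝ) + (m₁ : ℝ)) / 2))
            * Real.exp (-c * y₂ ^ 2 / t) := by
  have hY2 := hasPressureSymbol_Pten.iterate (p := 0) .dY2 m₂
  have hY1 := hY2.iterate (p := 1) (δ := 0) (fun h => by simpa using h.dY1) m₁
  have hX2 := hY1.iterate (p := 1) (δ := 0) (fun h => by simpa using h.dX2) k₂
  have hX1 := hX2.iterate (p := 1) (δ := 0) (fun h => by simpa using h.dX1) k₁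
  obtain ⟨C, hC, hle⟩ := (hX1.iterate (p := 0) .dT s).exists_abs_le hc
  refine ⟨C, hC, fun x₁ x₂ y₁ y₂ t hx ht => (hle x₁ x₂ y₁ y₂ t hx ht).trans_eq ?_⟩
  push_cast
  ring_nf

/-- Pointwise Gaussian-type upper bounds for all space-time derivatives of the pressure
tensor `P₁`: `|∂_t^s D_x^k D_y^m P₁| ≤ C t^{−1−s−m₂/2}(|x−y*|²+t)^{−(1+|k|+|m'|)/2}
e^{−c y₂²/t}` where `y* = (y₁,−y₂)`. -/
theorem stmt18 :
    ∀ s k₁ k₂ m₁ m₂ : ℕ, ∃ C > (0 : ℝ), ∃ c > (0 : ℝ),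
      ∀ x₁ x₂ y₁ y₂ t : ℝ, 0 ≤ x₂ → 0 < y₂ → 0 < t →
        |(DT^[s] (DX1^[k₁] (DX2^[k₂] (DY1^[m₁] (DY2^[m₂] Pten))))) x₁ x₂ y₁ y₂ t|
          ≤ C * t ^ (-1 - (s : ℝ) - (m₂ : ℝ) / 2)
              * ((x₁ - y₁) ^ 2 + (x₂ + y₂) ^ 2 + t)
                  ^ (-((1 + (k₁ : ℝ) + (k₂ : ℝ) + (m₁ : ℝ)) / 2))
              * Real.exp (-c * y₂ ^ 2 / t) := by
  intro s k₁ k₂ m₁ m₂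
  obtain ⟨C, hC, hle⟩ := stmt18_general (c := 1 / 8) (by norm_num) s k₁ k₂ m₁ m₂
  exact ⟨C, hC, 1 / 8, by norm_num, fun x₁ x₂ y₁ y₂ t hx _ => hle x₁ x₂ y₁ y₂ t hx⟩
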